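/- arXiv:0709.0420 — 7 statements merged into one kernel-verified Lean document; each statement's English description precedes it below -/
import Mathlib

section
/- There exists a free ultrafilter U on the natural numbers such that for every one-to-one function f : ℕ → ℕ there exists a set A ∈ U with f[A] belonging to the summable ideal, i.e., the sum of the reciprocals of the elements of f[A] is finite. -/
/-- A free ultrafilter on ℕ: an ultrafilter containing no finite set. -/
def IsFreeUltrafilter (U : Ultrafilter ℕ) : Prop :=
  ∀ s : Set ℕ, s.Finite → s ∉ U

/-- Membership in the summable ideal: the sum of reciprocals of the elements is finite. -/
def MemSummableIdeal (A : Set ℕ) : Prop :=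
  Summable fun a : A => (1 : ℝ) / ((a : ℕ) : ℝ)

/-!
Replace ℕ by the disjoint union of cubes `Fin k → Fin (n k)`. The cross of a point `a` of a cube is
the union of the hyperplanes `x i = a i`. Any `k` crosses of a `k`-dimensional cube meet, by a
diagonal choice of coordinates, so the sets that are a cross in every cube have the finite
intersection property. On the other hand, the reciprocals of `n ^ k` distinct naturals sum to
`O(k log n)`, so by pigeonhole some hyperplane in each of the `k` directions has weight
`O(k log n / n)`. For `n = n k` large enough this gives, in every cube and for every injective
labelling by naturals, a cross of weight at most `2⁻ᵏ`.
-/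

open Filter Asymptotics

section Cross

variable {ι κ : Type*}

/-- The cross centred at `a`: the union of the axis-parallel hyperplanes through `a`. -/
def cross (a : ι → κ) : Set (ι → κ) :=
  {x | ∃ i, x i = a i}

theorem exists_forall_mem_cross {T : Type*} {j : ι → T} (hj : j.Surjective) (a : T → ι → κ) :
    ∃ x, ∀ t, x ∈ cross (a t) := by
  refine ⟨fun i ↦ a (j i) i, fun t ↦ ?_⟩
  obtain ⟨i, rfl⟩ := hj t
  exact ⟨i, rfl⟩

theorem exists_notMem_cross [Nontrivial κ] (x : ι → κ) : ∃ a, x ∉ cross a := by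
  choose a ha using fun i ↦ exists_ne (x i)
  exact ⟨a, fun ⟨i, hi⟩ ↦ ha i hi.symm⟩

theorem indicator_cross_le_sum {M : Type*} [AddCommMonoid M] [PartialOrder M]
    [IsOrderedAddMonoid M] [Fintype ι] {w : (ι → κ) → M} (hw : 0 ≤ w) (a x : ι → κ) :
    (cross a).indicator w x ≤ ∑ i, {y : ι → κ | y i = a i}.indicator w x := by
  have term_nonneg (i : ι) : 0 ≤ {y : ι → κ | y i = a i}.indicator w x :=
    Set.indicator_nonneg (fun y _ ↦ hw y) x
  by_cases hx : x ∈ cross a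
  · obtain ⟨i, hi⟩ := id hx
    calc (cross a).indicator w x = w x := Set.indicator_of_mem hx w
      _ = {y : ι → κ | y i = a i}.indicator w x :=
        (Set.indicator_of_mem (s := {y : ι → κ | y i = a i}) hi w).symm
      _ ≤ _ := Finset.single_le_sum (fun i _ ↦ term_nonneg i) (Finset.mem_univ i)
  · rw [Set.indicator_of_notMem hx]
    exact Finset.sum_nonneg fun i _ ↦ term_nonneg i

variable {𝕜 : Type*} [Field 𝕜] [LinearOrder 𝕜] [IsStrictOrderedRing 𝕜]

theorem exists_sum_indicator_fiber_le {Ω : Type*} [Fintype Ω] [Fintype κ] [Nonempty κ]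
    (g : Ω → κ) (w : Ω → 𝕜) :
    ∃ c, ∑ x, {x | g x = c}.indicator w x ≤ (∑ x, w x) / Fintype.card κ := by
  classical
  have mean : ∑ x, w x ≤ Fintype.card κ • ((∑ x, w x) / Fintype.card κ) := by
    rw [nsmul_eq_mul, mul_div_cancel₀ _ (Nat.cast_ne_zero.2 Fintype.card_ne_zero)]
  obtain ⟨c, hc⟩ := Fintype.exists_sum_fiber_le_of_sum_le_nsmul g mean
  refine ⟨c, le_of_eq_of_le ?_ hc⟩
  simp only [Finset.sum_filter, Set.indicator_apply, Set.mem_ofPred_eq]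

theorem exists_sum_indicator_cross_le [Fintype ι] [DecidableEq ι] [Fintype κ] [Nonempty κ]
    {w : (ι → κ) → 𝕜} (hw : 0 ≤ w) :
    ∃ a, ∑ x, (cross a).indicator w x ≤ Fintype.card ι * ((∑ x, w x) / Fintype.card κ) := by
  choose a ha using fun i : ι ↦ exists_sum_indicator_fiber_le (fun x : ι → κ ↦ x i) w
  refine ⟨a, ?_⟩
  calc ∑ x, (cross a).indicator w x
      ≤ ∑ x, ∑ i, {y : ι → κ | y i = a i}.indicator w x :=
        Finset.sum_le_sum fun x _ ↦ indicator_cross_le_sum hw a x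
    _ = ∑ i, ∑ x, {y : ι → κ | y i = a i}.indicator w x := Finset.sum_comm
    _ ≤ ∑ _i : ι, (∑ x, w x) / Fintype.card κ := Finset.sum_le_sum fun i _ ↦ ha i
    _ = Fintype.card ι * ((∑ x, w x) / Fintype.card κ) := by
        rw [Finset.sum_const, Finset.card_univ, nsmul_eq_mul]

end Cross

section CrossFilter

variable (κ : ℕ → Type*)

/-- The filter on the disjoint union of the cubes `Fin k → κ k`, `k : ℕ`, generated by the sets
that are a cross in each cube. -/
def crossFilter : Filter (Σ k, Fin k → κ k) :=
  ⨅ a : ∀ k, Fin k → κ k, 𝓟 {p | p.2 ∈ cross (a p.1)}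

variable {κ}

theorem setOf_mem_cross_mem_crossFilter (a : ∀ k, Fin k → κ k) :
    {p : Σ k, Fin k → κ k | p.2 ∈ cross (a p.1)} ∈ crossFilter κ :=
  mem_iInf_of_mem a (mem_principal_self _)

instance crossFilter_neBot : (crossFilter κ).NeBot := by
  refine (hasBasis_iInf_principal_finite _).neBot_iff.2 fun {t} ht ↦ ?_
  have := ht.fintype
  obtain ⟨x, hx⟩ := exists_forall_mem_cross (Fintype.equivFin t).symm.surjective
    fun a ↦ a.1 (Fintype.card t)
  exact ⟨⟨Fintype.card t, x⟩, Set.mem_iInter₂.2 fun a ha ↦ hx ⟨a, ha⟩⟩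

theorem crossFilter_le_cofinite [∀ k, Nontrivial (κ k)] : crossFilter κ ≤ cofinite := by
  refine le_cofinite_iff_compl_singleton_mem.2 fun ⟨k, x⟩ ↦ ?_
  obtain ⟨b, hb⟩ := exists_notMem_cross x
  let a : ∀ l, Fin l → κ l := Function.update (fun _ _ ↦ Classical.arbitrary _) k b
  refine mem_of_superset (setOf_mem_cross_mem_crossFilter a) fun p hp hpx ↦ hb ?_
  obtain rfl : p = ⟨k, x⟩ := hpx
  simpa only [Set.mem_ofPred_eq, a, Function.update_self] using hp

end CrossFilter

theorem summable_sigma_of_sum_le {ι : Type*} {β : ι → Type*} [∀ i, Fintype (β i)]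
    {g : (Σ i, β i) → ℝ} (hg : 0 ≤ g) {u : ι → ℝ} (hu : Summable u)
    (hgu : ∀ i, ∑ x, g ⟨i, x⟩ ≤ u i) : Summable g := by
  refine (summable_sigma_of_nonneg hg).2 ⟨fun i ↦ Summable.of_finite, ?_⟩
  refine hu.of_nonneg_of_le (fun i ↦ tsum_nonneg fun x ↦ hg _) fun i ↦ ?_
  rw [tsum_fintype]
  exact hgu i

theorem summable_image_iff_of_injOn {α β M : Type*} [AddCommMonoid M] [TopologicalSpace M]
    {f : α → β} {A : Set α} (hf : A.InjOn f) (w : β → M) :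
    (Summable fun b : f '' A ↦ w b) ↔ Summable fun a : A ↦ w (f a) :=
  (Equiv.Set.imageOfInjOn f A hf).summable_iff.symm

theorem exists_two_le_and_mul_div_le_of_isLittleO {B : ℕ → ℝ}
    (hB : B =o[atTop] fun n ↦ (n : ℝ)) (c : ℝ) {ε : ℝ} (hε : 0 < ε) :
    ∃ n, 2 ≤ n ∧ c * (B n / n) ≤ ε := by
  have lim : Tendsto (fun n ↦ c * (B n / n)) atTop (nhds 0) := by
    simpa only [mul_zero] using hB.tendsto_div_nhds_zero.const_mul c
  exact ((eventually_ge_atTop 2).and (lim.eventually_le_const hε)).exists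

theorem exists_sum_indicator_cross_comp_le {α : Type*} {B : ℕ → ℝ} {w : α → ℝ} {k n : ℕ}
    [NeZero n] {e : (Fin k → Fin n) → α} (he : e.Injective) (hw : 0 ≤ w)
    (hwB : ∀ S : Finset α, ∑ a ∈ S, w a ≤ B S.card) :
    ∃ a, ∑ x, (cross a).indicator (w ∘ e) x ≤ k * (B (n ^ k) / n) := by
  obtain ⟨a, ha⟩ := exists_sum_indicator_cross_le (w := w ∘ e) fun x ↦ hw (e x)
  have total : ∑ x, (w ∘ e) x ≤ B (n ^ k) := by
    simpa using hwB (Finset.univ.map ⟨e, he⟩)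
  refine ⟨a, ha.trans ?_⟩
  simp only [Fintype.card_fin]
  gcongr

theorem exists_summable_ultrafilter_general {α : Type*} [Infinite α] {B : ℕ → ℝ}
    (hB : ∀ k : ℕ, (fun n : ℕ ↦ B (n ^ k)) =o[atTop] fun n : ℕ ↦ (n : ℝ)) :
    ∃ U : Ultrafilter α, (U : Filter α) ≤ cofinite ∧
      ∀ w : α → ℝ, 0 ≤ w → (∀ S : Finset α, ∑ a ∈ S, w a ≤ B S.card) →
        ∃ A ∈ U, Summable fun a : A ↦ w a := by
  choose n two_le hn using fun k : ℕ ↦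
    exists_two_le_and_mul_div_le_of_isLittleO (hB k) k (ε := (1 / 2 : ℝ) ^ k) (by positivity)
  have (k : ℕ) : Nontrivial (Fin (n k)) := Fin.nontrivial_iff_two_le.2 (two_le k)
  have (k : ℕ) : NeZero (n k) := ⟨by have := two_le k; omega⟩
  obtain ⟨e, he⟩ : ∃ e : (Σ k, Fin k → Fin (n k)) → α, e.Injective := by
    obtain ⟨c, hc⟩ := exists_injective_nat (Σ k, Fin k → Fin (n k))
    exact ⟨_, (Infinite.natEmbedding α).injective.comp hc⟩
  refine ⟨(Ultrafilter.of (crossFilter fun k ↦ Fin (n k))).map e, ?_, fun w hw hwB ↦ ?_⟩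
  · exact he.tendsto_cofinite.mono_left ((Ultrafilter.of_le _).trans crossFilter_le_cofinite)
  choose a ha using fun k ↦
    exists_sum_indicator_cross_comp_le (B := B) (e := fun x ↦ e ⟨k, x⟩)
      (he.comp sigma_mk_injective) hw hwB
  let C : Set (Σ k, Fin k → Fin (n k)) := {p | p.2 ∈ cross (a p.1)}
  refine ⟨e '' C, ?_, ?_⟩
  · exact image_mem_map (Ultrafilter.of_le _ (setOf_mem_cross_mem_crossFilter a))
  rw [summable_image_iff_of_injOn he.injOn]
  refine summable_subtype_iff_indicator (f := w ∘ e).2 ?_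
  exact summable_sigma_of_sum_le (Set.indicator_nonneg fun p _ ↦ hw (e p))
    summable_geometric_two fun k ↦ (ha k).trans (hn k)

theorem sum_le_sum_range_card_of_antitone {M : Type*} [AddCommMonoid M] [PartialOrder M]
    [IsOrderedAddMonoid M] {g : ℕ → M} (hg : Antitone g) (S : Finset ℕ) :
    ∑ a ∈ S, g a ≤ ∑ i ∈ Finset.range S.card, g i := by
  induction S using Finset.induction_on_max with
  | empty => rfl
  | insert m S hm ih =>
    have hmS : m ∉ S := fun h ↦ (hm m h).false
    have card_le : S.card ≤ m := by
      simpa using Finset.card_le_card fun x hx ↦ Finset.mem_range.2 (hm x hx)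
    rw [Finset.sum_insert hmS, Finset.card_insert_of_notMem hmS, Finset.sum_range_succ, add_comm]
    exact add_le_add ih (hg card_le)

theorem sum_one_div_le_log_card (S : Finset ℕ) :
    ∑ a ∈ S, (1 : ℝ) / a ≤ 2 * (1 + Real.log S.card) := by
  have inv_antitone : Antitone fun a : ℕ ↦ ((a : ℝ) + 1)⁻¹ := fun a b hab ↦ by
    beta_reduce; gcongr
  -- The shift by one also covers `a = 0`, where `1 / a = 0`.
  have one_div_le (a : ℕ) : (1 : ℝ) / a ≤ 2 * ((a : ℝ) + 1)⁻¹ := by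
    rcases a.eq_zero_or_pos with rfl | ha
    · simp
    · have : (1 : ℝ) ≤ a := mod_cast ha
      rw [← div_eq_mul_inv, div_le_div_iff₀ (by positivity) (by positivity)]
      linarith
  calc ∑ a ∈ S, (1 : ℝ) / a
      ≤ 2 * ∑ a ∈ S, ((a : ℝ) + 1)⁻¹ := by
        rw [Finset.mul_sum]
        exact Finset.sum_le_sum fun a _ ↦ one_div_le a
    _ ≤ 2 * ∑ i ∈ Finset.range S.card, ((i : ℝ) + 1)⁻¹ :=
        mul_le_mul_of_nonneg_left (sum_le_sum_range_card_of_antitone inv_antitone S) zero_le_two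
    _ = 2 * (harmonic S.card : ℝ) := by simp [harmonic]
    _ ≤ 2 * (1 + Real.log S.card) := by
        gcongr
        exact harmonic_le_one_add_log _

theorem sum_one_div_comp_le_log_card {α : Type*} {f : α → ℕ} (hf : f.Injective) (S : Finset α) :
    ∑ a ∈ S, (1 : ℝ) / f a ≤ 2 * (1 + Real.log S.card) := by
  simpa using sum_one_div_le_log_card (S.map ⟨f, hf⟩)

theorem isLittleO_two_mul_one_add_log_pow (k : ℕ) :
    (fun n : ℕ ↦ 2 * (1 + Real.log (n ^ k : ℕ))) =o[atTop] fun n : ℕ ↦ (n : ℝ) := by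
  have log_pow : (fun x : ℝ ↦ Real.log (x ^ k)) =o[atTop] (id : ℝ → ℝ) := by
    simpa only [Real.log_pow] using Real.isLittleO_log_id_atTop.const_mul_left (k : ℝ)
  have real := ((isLittleO_const_id_atTop (1 : ℝ)).add log_pow).const_mul_left 2
  simpa [Function.comp_def] using real.comp_tendsto tendsto_natCast_atTop_atTop

theorem isFreeUltrafilter_of_le_cofinite {U : Ultrafilter ℕ} (hU : (U : Filter ℕ) ≤ cofinite) :
    IsFreeUltrafilter U :=
  fun _ hs ↦ Ultrafilter.compl_mem_iff_notMem.1 (hU hs.compl_mem_cofinite)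

theorem memSummableIdeal_image_iff {f : ℕ → ℕ} {A : Set ℕ} (hf : A.InjOn f) :
    MemSummableIdeal (f '' A) ↔ Summable fun a : A ↦ (1 : ℝ) / f a :=
  summable_image_iff_of_injOn hf fun b : ℕ ↦ (1 : ℝ) / b

/-- There exists a free ultrafilter `U` on ℕ such that for every one-to-one
function `f : ℕ → ℕ` there is a set `A ∈ U` with `f '' A` in the summable ideal. -/
theorem exists_summable_ultrafilter :
    ∃ U : Ultrafilter ℕ, IsFreeUltrafilter U ∧
      ∀ f : ℕ → ℕ, Function.Injective f →
        ∃ A ∈ U, MemSummableIdeal (f '' A) := by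
  obtain ⟨U, hU, h⟩ := exists_summable_ultrafilter_general (α := ℕ)
    (B := fun m ↦ 2 * (1 + Real.log m)) isLittleO_two_mul_one_add_log_pow
  refine ⟨U, isFreeUltrafilter_of_le_cofinite hU, fun f hf ↦ ?_⟩
  exact (h _ (fun _ ↦ by positivity) (sum_one_div_comp_le_log_card hf)).imp
    fun A ↦ And.imp_right (memSummableIdeal_image_iff hf.injOn).2
end

section
/- A free ultrafilter U on ℕ is a thin ultrafilter if and only if it is an almost-thin ultrafilter; that is, for every function f : ℕ → ℕ there is A ∈ U with f[A] thin or finite if and only if for every function f : ℕ → ℕ there is A ∈ U with f[A] almost thin or finite. -/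
/-- An infinite set `A ⊆ ℕ`, with increasing enumeration `a₀ < a₁ < ⋯` given by
`Nat.nth`, is thin if `aₙ / aₙ₊₁ → 0`. -/
def IsThin (A : Set ℕ) : Prop :=
  A.Infinite ∧
    Filter.Tendsto
      (fun n : ℕ => (Nat.nth (· ∈ A) n : ℝ) / (Nat.nth (· ∈ A) (n + 1) : ℝ))
      Filter.atTop (nhds 0)

/-- An infinite set `A ⊆ ℕ`, with increasing enumeration `a₀ < a₁ < ⋯` given by
`Nat.nth`, is almost thin if `limsup aₙ / aₙ₊₁ < 1`. -/
def IsAlmostThin (A : Set ℕ) : Prop :=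
  A.Infinite ∧
    Filter.limsup
      (fun n : ℕ => (Nat.nth (· ∈ A) n : ℝ) / (Nat.nth (· ∈ A) (n + 1) : ℝ))
      Filter.atTop < 1

/-!
If `B = {b₀ < b₁ < ⋯}` and `D` are both almost thin, then `{b_d : d ∈ D}` is thin: the gaps of `D`
tend to infinity, and every step from `bᵢ` to `bᵢ₊₁` gains at least a fixed factor `> 1`. Hence, if
`f[A] = B` is almost thin and `g` sends `n ∈ A` to the index of `f n` in `B`, a second use of
almost-thinness, for `g`, yields `A'` such that `f[A ∩ A']` lies in `{b_d : d ∈ g[A']}`.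
-/

open Filter Set

theorem eventually_mem_image_iff_of_strictMono {α β : Type*} [LinearOrder α] [Preorder β]
    {b : α → β} (hb : StrictMono b) (hub : ∀ y, ∃ x, y ≤ b x) {s : Set α} {p : β → Prop} :
    (∀ᶠ y in atTop, y ∈ b '' s → p y) ↔ ∀ᶠ x in atTop, x ∈ s → p (b x) := by
  rw [← comap_embedding_atTop (fun _ _ ↦ hb.le_iff_le) hub, eventually_comap]
  exact eventually_congr (.of_forall fun y ↦ by grind)

theorem eventually_le_pow_mul_add {R : Type*} [Semiring R] [PartialOrder R] [IsOrderedRing R]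
    {q : R} {u : ℕ → R} (hq : 0 ≤ q) (hu : ∀ᶠ n in atTop, u n ≤ q * u (n + 1)) (k : ℕ) :
    ∀ᶠ n in atTop, u n ≤ q ^ k * u (n + k) := by
  induction k with
  | zero => simp
  | succ k ih =>
    filter_upwards [ih, (tendsto_add_atTop_nat k).eventually hu] with n hn hnk
    calc
      u n ≤ q ^ k * u (n + k) := hn
      _ ≤ q ^ k * (q * u (n + k + 1)) := by gcongr
      _ = q ^ (k + 1) * u (n + (k + 1)) := by rw [pow_succ, mul_assoc, add_assoc]

theorem tendsto_nhds_iff_forall_eventually_le {α β : Type*} [LinearOrder β] [DenselyOrdered β]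
    [TopologicalSpace β] [OrderTopology β] {l : Filter α} {u : α → β} {a : β}
    (hu : ∀ x, a ≤ u x) : Tendsto u l (nhds a) ↔ ∀ c > a, ∀ᶠ x in l, u x ≤ c := by
  refine ⟨fun h c hc ↦ h.eventually_le_const hc, fun h ↦ tendsto_order.2 ⟨?_, ?_⟩⟩
  · exact fun c hc ↦ .of_forall fun x ↦ hc.trans_le (hu x)
  · intro c hc
    obtain ⟨d, had, hdc⟩ := exists_between hc
    exact (h d had).mono fun x hx ↦ hx.trans_lt hdc

/-- All but finitely many `x ∈ A` satisfy `x ≤ q * y` for every larger `y ∈ A`. This bounds the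
ratios `aₙ / aₙ₊₁` of an enumeration eventually by `q`, without mentioning the enumeration, so it
makes sense for finite `A` and passes to subsets. -/
def EventuallyRatioLE (q : ℝ) (A : Set ℕ) : Prop :=
  ∀ᶠ x : ℕ in atTop, x ∈ A → ∀ y ∈ A, x < y → (x : ℝ) ≤ q * y

section EventuallyRatioLE

variable {q r : ℝ} {A B D : Set ℕ} {b : ℕ → ℕ}

theorem EventuallyRatioLE.mono_set (hA : EventuallyRatioLE q A) (hBA : B ⊆ A) :
    EventuallyRatioLE q B := by
  filter_upwards [hA] with x hx hxB y hyB
  exact hx (hBA hxB) y (hBA hyB)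

theorem EventuallyRatioLE.mono_ratio (hA : EventuallyRatioLE q A) (hqr : q ≤ r) :
    EventuallyRatioLE r A := by
  filter_upwards [hA] with x hx hxA y hyA hxy
  exact (hx hxA y hyA hxy).trans (by gcongr)

theorem EventuallyRatioLE.eventually_add_le (hA : EventuallyRatioLE q A) (hq : q < 1) (k : ℕ) :
    ∀ᶠ x in atTop, x ∈ A → ∀ y ∈ A, x < y → x + k ≤ y := by
  have hlarge : ∀ᶠ x : ℕ in atTop, (k : ℝ) / (1 - q) ≤ x :=
    tendsto_natCast_atTop_atTop.eventually_ge_atTop _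
  filter_upwards [hA, hlarge] with x hx hkx hxA y hyA hxy
  have hgap : (k : ℝ) ≤ y - x :=
    calc
      (k : ℝ) ≤ x * (1 - q) := (div_le_iff₀ (sub_pos.2 hq)).1 hkx
      _ ≤ y * (1 - q) := by gcongr
      _ = y - q * y := by ring
      _ ≤ y - x := by gcongr; exact hx hxA y hyA hxy
  exact_mod_cast le_sub_iff_add_le'.1 hgap

theorem eventuallyRatioLE_image_iff (hb : StrictMono b) :
    EventuallyRatioLE q (b '' D) ↔
      ∀ᶠ i in atTop, i ∈ D → ∀ j ∈ D, i < j → (b i : ℝ) ≤ q * b j := by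
  simp only [EventuallyRatioLE, forall_mem_image, hb.lt_iff_lt,
    eventually_mem_image_iff_of_strictMono hb fun n ↦ ⟨n, hb.le_apply⟩]

theorem eventuallyRatioLE_range_iff (hb : StrictMono b) (hq : 0 ≤ q) :
    EventuallyRatioLE q (range b) ↔ ∀ᶠ n in atTop, (b n : ℝ) ≤ q * b (n + 1) := by
  simp only [← image_univ, eventuallyRatioLE_image_iff hb, mem_univ, forall_const]
  refine eventually_congr (.of_forall fun i ↦ ⟨fun h ↦ h _ i.lt_succ_self, fun h j hij ↦ ?_⟩)
  have hbj : b (i + 1) ≤ b j := hb.monotone hij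
  exact h.trans (by gcongr)

theorem EventuallyRatioLE.image_of_range (hb : StrictMono b) (hq : 0 ≤ q)
    (hB : EventuallyRatioLE q (range b)) (hr : r < 1) (hD : EventuallyRatioLE r D) (k : ℕ) :
    EventuallyRatioLE (q ^ k) (b '' D) := by
  have hpow := eventually_le_pow_mul_add hq ((eventuallyRatioLE_range_iff hb hq).1 hB) k
  rw [eventuallyRatioLE_image_iff hb]
  filter_upwards [hD.eventually_add_le hr k, hpow] with i hgap hi hiD j hjD hij
  have hbj : b (i + k) ≤ b j := hb.monotone (hgap hiD j hjD hij)
  exact hi.trans (by gcongr)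

end EventuallyRatioLE

section Thin

variable {A B D : Set ℕ}

theorem eventually_nth_div_nth_succ_le_iff (hA : A.Infinite) {q : ℝ} (hq : 0 ≤ q) :
    (∀ᶠ n in atTop, (Nat.nth (· ∈ A) n : ℝ) / Nat.nth (· ∈ A) (n + 1) ≤ q) ↔
      EventuallyRatioLE q A := by
  have hmono : StrictMono (Nat.nth (· ∈ A)) := Nat.nth_strictMono hA
  have hrange : range (Nat.nth (· ∈ A)) = A := Nat.range_nth_of_infinite hA
  have hpos (n : ℕ) : (0 : ℝ) < Nat.nth (· ∈ A) (n + 1) :=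
    Nat.cast_pos.2 (Nat.zero_lt_of_lt (hmono n.lt_succ_self))
  conv_rhs => rw [← hrange, eventuallyRatioLE_range_iff hmono hq]
  simp only [div_le_iff₀ (hpos _)]

theorem isThin_iff : IsThin A ↔ A.Infinite ∧ ∀ ε > 0, EventuallyRatioLE ε A := by
  refine and_congr_right fun hA ↦ ?_
  rw [tendsto_nhds_iff_forall_eventually_le fun n ↦ by positivity]
  exact forall₂_congr fun ε hε ↦ eventually_nth_div_nth_succ_le_iff hA hε.le

theorem isAlmostThin_iff :
    IsAlmostThin A ↔ A.Infinite ∧ ∃ q : ℝ, 0 ≤ q ∧ q < 1 ∧ EventuallyRatioLE q A := by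
  refine and_congr_right fun hA ↦ ⟨fun hlim ↦ ?_, fun ⟨q, hq₀, hq₁, hq⟩ ↦ ?_⟩
  · have hbdd : IsBoundedUnder (· ≤ ·) atTop
        fun n ↦ (Nat.nth (· ∈ A) n : ℝ) / Nat.nth (· ∈ A) (n + 1) :=
      isBoundedUnder_of ⟨1, fun n ↦ div_le_one_of_le₀
        (by exact_mod_cast (Nat.nth_strictMono hA).monotone n.le_succ) (Nat.cast_nonneg _)⟩
    obtain ⟨q, hlimq, hq₁⟩ := exists_between hlim
    have hq := eventually_lt_of_limsup_lt hlimq hbdd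
    obtain ⟨n, hn⟩ := hq.exists
    have hq₀ : 0 ≤ q := le_trans (by positivity) hn.le
    exact ⟨q, hq₀, hq₁, (eventually_nth_div_nth_succ_le_iff hA hq₀).1 (hq.mono fun _ ↦ le_of_lt)⟩
  · have hcobdd : IsCoboundedUnder (· ≤ ·) atTop
        fun n ↦ (Nat.nth (· ∈ A) n : ℝ) / Nat.nth (· ∈ A) (n + 1) :=
      (isBoundedUnder_of ⟨0, fun n ↦ by positivity⟩).isCoboundedUnder_le
    exact (limsup_le_of_le hcobdd ((eventually_nth_div_nth_succ_le_iff hA hq₀).2 hq)).trans_lt hq₁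

theorem IsThin.isAlmostThin (hA : IsThin A) : IsAlmostThin A := by
  obtain ⟨hinf, hratio⟩ := isThin_iff.1 hA
  exact isAlmostThin_iff.2 ⟨hinf, 1 / 2, by norm_num, by norm_num, hratio _ (by norm_num)⟩

theorem IsThin.mono (hA : IsThin A) (hBA : B ⊆ A) (hB : B.Infinite) : IsThin B :=
  isThin_iff.2 ⟨hB, fun ε hε ↦ ((isThin_iff.1 hA).2 ε hε).mono_set hBA⟩

theorem IsAlmostThin.isThin_image_nth (hB : IsAlmostThin B) (hD : IsAlmostThin D) :
    IsThin (Nat.nth (· ∈ B) '' D) := by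
  obtain ⟨hBinf, q, hq₀, hq₁, hq⟩ := isAlmostThin_iff.1 hB
  obtain ⟨hDinf, r, -, hr₁, hr⟩ := isAlmostThin_iff.1 hD
  have hmono : StrictMono (Nat.nth (· ∈ B)) := Nat.nth_strictMono hBinf
  have hrange : range (Nat.nth (· ∈ B)) = B := Nat.range_nth_of_infinite hBinf
  refine isThin_iff.2 ⟨hDinf.image hmono.injective.injOn, fun ε hε ↦ ?_⟩
  obtain ⟨k, hk⟩ := exists_pow_lt_of_lt_one hε hq₁
  rw [← hrange] at hq
  exact (EventuallyRatioLE.image_of_range hmono hq₀ hq hr₁ hr k).mono_ratio hk.le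

end Thin

theorem thin_ultrafilter_iff_almost_thin_ultrafilter_general {α : Type*} (F : Filter α) :
    (∀ f : α → ℕ, ∃ A ∈ F, IsThin (f '' A) ∨ (f '' A).Finite) ↔
      (∀ f : α → ℕ, ∃ A ∈ F, IsAlmostThin (f '' A) ∨ (f '' A).Finite) := by
  classical
  refine ⟨fun h f ↦ ?_, fun h f ↦ ?_⟩
  · obtain ⟨A, hA, hfA⟩ := h f
    exact ⟨A, hA, hfA.imp_left IsThin.isAlmostThin⟩
  · obtain ⟨A, hA, hB | hfin⟩ := h f
    case inr => exact ⟨A, hA, .inr hfin⟩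
    set B := f '' A
    let g (n : α) : ℕ := Nat.count (· ∈ B) (f n)
    obtain ⟨A', hA', hD⟩ := h g
    have hsub : f '' (A ∩ A') ⊆ Nat.nth (· ∈ B) '' (g '' A') := by
      rintro _ ⟨n, ⟨hn, hn'⟩, rfl⟩
      exact ⟨g n, mem_image_of_mem g hn', Nat.nth_count (p := (· ∈ B)) (mem_image_of_mem f hn)⟩
    refine ⟨A ∩ A', inter_mem hA hA', or_iff_not_imp_right.2 fun hinf ↦ ?_⟩
    rcases hD with hD | hfin
    · exact (hB.isThin_image_nth hD).mono hsub hinf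
    · exact absurd ((hfin.image _).subset hsub) hinf

/-- A free ultrafilter on ℕ is a thin ultrafilter iff it is an almost-thin
ultrafilter. -/
theorem thin_ultrafilter_iff_almost_thin_ultrafilter (U : Ultrafilter ℕ)
    (hfree : IsFreeUltrafilter U) :
    (∀ f : ℕ → ℕ, ∃ A ∈ U, IsThin (f '' A) ∨ (f '' A).Finite) ↔
      (∀ f : ℕ → ℕ, ∃ A ∈ U, IsAlmostThin (f '' A) ∨ (f '' A).Finite) :=
  thin_ultrafilter_iff_almost_thin_ultrafilter_general (U : Filter ℕ)
end

section
/- If I is a P-ideal on ℕ containing all singletons and all finite sets, and U and V are I-ultrafilters, then the product U · V is again an I-ultrafilter; that is, for every function F : ℕ × ℕ → ℕ there exists a set M ∈ U · V such that F[M] ∈ I. -/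
/-- The product `U · V` of two ultrafilters on ℕ: an ultrafilter on ℕ × ℕ with
`M ∈ U · V` iff `{n : {m : (n, m) ∈ M} ∈ V} ∈ U`. -/
def ufProd (U V : Ultrafilter ℕ) : Ultrafilter (ℕ × ℕ) :=
  U.bind fun n => V.map fun m => (n, m)

/-- The defining property of the product ultrafilter. -/
theorem mem_ufProd (U V : Ultrafilter ℕ) (M : Set (ℕ × ℕ)) :
    M ∈ ufProd U V ↔ {n : ℕ | {m : ℕ | (n, m) ∈ M} ∈ V} ∈ U :=
  Iff.rfl

/-!
Choose `A n ∈ V` whose image under the section `F (n, ·)` lies in `I`, and let `B ∈ I` contain all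
these images up to finite sets. An ultrafilter containing the union of `B` and a finite set contains
`B ∪ {k}` for a single `k`, so for each `n` some `g n` satisfies `F (n, m) ∈ B ∪ {g n}` for
`V`-almost all `m`. If `C ∈ U` has `g[C] ∈ I`, then `F⁻¹[B ∪ g[C]] ∈ U · V`. Since `U · V` is the
`U`-sum of the copies of `V` on the columns `{n} × ℕ`, this is a property of sums of ultrafilters
over a countable index set.
-/

section

variable {ι α β γ : Type*}

/-- P-ideals of sets: every sequence in the ideal has an upper bound in it modulo finite sets.
Neither properness nor containing the finite sets is part of the definition. -/
structure IsPIdeal (I : Set (Set γ)) : Prop extends Order.IsIdeal I where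
  exists_forall_finite_diff_nat :
    ∀ A : ℕ → Set γ, (∀ n, A n ∈ I) → ∃ B ∈ I, ∀ n, (A n \ B).Finite

/-- `I`-ultrafilters, for a family `I` of sets in `γ` and an ultrafilter on a possibly different
type `α`; freeness is not part of the definition. -/
def IsIUltrafilter (I : Set (Set γ)) (U : Ultrafilter α) : Prop :=
  ∀ f : α → γ, ∃ A ∈ U, f '' A ∈ I

variable {I : Set (Set γ)}

theorem IsPIdeal.exists_forall_finite_diff [Countable ι] [Nonempty ι]
    (hI : IsPIdeal I) {A : ι → Set γ} (hA : ∀ i, A i ∈ I) :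
    ∃ B ∈ I, ∀ i, (A i \ B).Finite := by
  obtain ⟨e, he⟩ := exists_surjective_nat ι
  obtain ⟨B, hB, hAB⟩ := hI.exists_forall_finite_diff_nat (A ∘ e) fun n => hA (e n)
  exact ⟨B, hB, he.forall.mpr hAB⟩

theorem IsIUltrafilter.map {U : Ultrafilter α} (hU : IsIUltrafilter I U) (g : α → β) :
    IsIUltrafilter I (U.map g) := by
  intro f
  obtain ⟨A, hA, hfA⟩ := hU (f ∘ g)
  exact ⟨g '' A, Filter.image_mem_map hA, Set.image_comp f g A ▸ hfA⟩

theorem exists_insert_mem_ultrafilter_of_finite_diff {W : Ultrafilter γ} {S B : Set γ}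
    (hS : S ∈ W) (hSB : (S \ B).Finite) : ∃ k, insert k B ∈ W := by
  by_cases hB : B ∈ W
  · obtain ⟨k, -⟩ := W.nonempty_of_mem hS
    exact ⟨k, Filter.mem_of_superset hB (Set.subset_insert k B)⟩
  · have hdiff : S \ B ∈ W := Filter.inter_mem hS (Ultrafilter.compl_mem_iff_notMem.mpr hB)
    obtain ⟨k, -, rfl⟩ := Ultrafilter.eq_pure_of_finite_mem hSB hdiff
    exact ⟨k, Set.mem_insert k B⟩

theorem prod_of_I_ultrafilters_is_I_ultrafilter_general [Countable ι]
    (hI : IsPIdeal I) {U : Ultrafilter ι} {V : ι → Ultrafilter α}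
    (hU : IsIUltrafilter I U) (hV : ∀ i, IsIUltrafilter I (V i)) :
    IsIUltrafilter I (U.bind V) := by
  intro F
  have : Nonempty ι := Filter.nonempty_of_neBot (U : Filter ι)
  choose A hA hFA using fun i => hV i F
  obtain ⟨B, hB, hFAB⟩ := hI.exists_forall_finite_diff hFA
  have hinsert (i : ι) : ∃ k, insert k B ∈ (V i).map F :=
    exists_insert_mem_ultrafilter_of_finite_diff (Filter.image_mem_map (hA i)) (hFAB i)
  choose g hg using hinsert
  obtain ⟨C, hC, hgC⟩ := hU g
  obtain ⟨D, hD, hBD, hgCD⟩ := hI.Directed B hB (g '' C) hgC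
  have hFD : ∀ i ∈ C, F ⁻¹' D ∈ V i := fun i hi =>
    Filter.mem_of_superset (hg i) <| Set.preimage_mono <|
      Set.insert_subset (hgCD (Set.mem_image_of_mem g hi)) hBD
  have hbind : F ⁻¹' D ∈ U.bind V := Filter.mem_bind.mpr ⟨C, hC, hFD⟩
  exact ⟨F ⁻¹' D, hbind, hI.IsLowerSet (Set.image_preimage_subset F D) hD⟩

end

/-- If `I` is a P-ideal on ℕ containing all singletons and all finite sets,
and `U`, `V` are `I`-ultrafilters, then `U · V` is again an `I`-ultrafilter. -/
theorem prod_of_I_ultrafilters_is_I_ultrafilter (I : Set (Set ℕ))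
    (hsubset : ∀ A B : Set ℕ, A ⊆ B → B ∈ I → A ∈ I)
    (hunion : ∀ A B : Set ℕ, A ∈ I → B ∈ I → A ∪ B ∈ I)
    (hsingle : ∀ n : ℕ, {n} ∈ I)
    (hfin : ∀ A : Set ℕ, A.Finite → A ∈ I)
    (hP : ∀ A : ℕ → Set ℕ, (∀ n, A n ∈ I) → ∃ B ∈ I, ∀ n, (A n \ B).Finite)
    (U V : Ultrafilter ℕ) (hUfree : IsFreeUltrafilter U)
    (hVfree : IsFreeUltrafilter V)
    (hU : ∀ f : ℕ → ℕ, ∃ A ∈ U, f '' A ∈ I)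
    (hV : ∀ f : ℕ → ℕ, ∃ A ∈ V, f '' A ∈ I) :
    ∀ F : ℕ × ℕ → ℕ, ∃ M ∈ ufProd U V, F '' M ∈ I :=
  prod_of_I_ultrafilters_is_I_ultrafilter_general
    { IsLowerSet := fun B A hAB hB => hsubset A B hAB hB
      Nonempty := ⟨{0}, hsingle 0⟩
      Directed := fun A hA B hB =>
        ⟨A ∪ B, hunion A B hA hB, Set.subset_union_left, Set.subset_union_right⟩
      exists_forall_finite_diff_nat := hP }
    hU fun n => IsIUltrafilter.map hV fun m => (n, m)
end

section
/- For every free ultrafilter U on ℕ, the product U · U is not an (SC)-ultrafilter; that is, for any bijection e : ℕ × ℕ → ℕ, the image of U · U under e is not an (SC)-ultrafilter. -/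
/-- An infinite set `A ⊆ ℕ`, with increasing enumeration `a₀ < a₁ < ⋯` given by
`Nat.nth`, is an (SC)-set if `aₙ₊₁ - aₙ → ∞`. -/
def IsSCSet (A : Set ℕ) : Prop :=
  A.Infinite ∧
    Filter.Tendsto (fun n : ℕ => Nat.nth (· ∈ A) (n + 1) - Nat.nth (· ∈ A) n)
      Filter.atTop Filter.atTop

/-- A free ultrafilter `W` on ℕ is an (SC)-ultrafilter if for every `f : ℕ → ℕ`
there is `A ∈ W` with `f '' A` an (SC)-set or finite. -/
def IsSCUltrafilter (W : Ultrafilter ℕ) : Prop :=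
  ∀ f : ℕ → ℕ, ∃ A ∈ W, IsSCSet (f '' A) ∨ (f '' A).Finite

/-!
Apply the (SC) property to addition `(n, m) ↦ n + m`. Every member `M` of `U · V` has two columns
`a < b` that share infinitely many heights `m`, and for each of these both `a + m` and `b + m` are
sums of points of `M`. So the difference `b - a` occurs infinitely often among the sums, whereas in
a finite set or an (SC)-set every positive difference occurs only finitely often.
-/

section ThinSets

variable {A B : Set ℕ}

/-- A set `A` of natural numbers is thin if it meets each of its translates by a positive `d` in a
finite set. This treats (SC)-sets and finite sets uniformly. The intersection is encoded by the
lower element `x` of each pair `x, x + d`. -/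
def IsThinSet (A : Set ℕ) : Prop :=
  ∀ d > 0, {x | x ∈ A ∧ x + d ∈ A}.Finite

theorem IsThinSet.mono (hAB : A ⊆ B) (hB : IsThinSet B) : IsThinSet A :=
  fun d hd => (hB d hd).subset fun _ hx => ⟨hAB hx.1, hAB hx.2⟩

theorem isThinSet_of_finite (hA : A.Finite) : IsThinSet A :=
  fun _ _ => hA.subset fun _ hx => hx.1

theorem IsSCSet.isThinSet (hA : IsSCSet A) : IsThinSet A := by
  intro d hd
  obtain ⟨N, hgap⟩ := Filter.eventually_atTop.1 (hA.2.eventually_gt_atTop d)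
  refine ((Set.finite_Iio N).image (Nat.nth (· ∈ A))).subset ?_
  rintro x ⟨hx, hxd⟩
  obtain ⟨k, -, rfl⟩ := Nat.exists_lt_card_nth_eq (p := (· ∈ A)) hx
  refine ⟨k, Set.mem_Iio.2 <| not_le.1 fun hNk => ?_, rfl⟩
  have hlt : Nat.nth (· ∈ A) k + d < Nat.nth (· ∈ A) (k + 1) :=
    Nat.add_lt_of_lt_sub' (hgap k hNk)
  have hle : Nat.nth (· ∈ A) k + d ≤ Nat.nth (· ∈ A) k := Nat.le_nth_of_lt_nth_succ hlt hxd
  exact (Nat.lt_add_of_pos_right hd).not_ge hle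

end ThinSets

theorem IsSCUltrafilter.exists_isThinSet_image {α : Type*} {W : Ultrafilter α} {e : α → ℕ}
    (hW : IsSCUltrafilter (W.map e)) (he : Function.Injective e) (f : α → ℕ) :
    ∃ M ∈ W, IsThinSet (f '' M) := by
  obtain ⟨A, hA, hfA⟩ := hW (Function.extend e f 0)
  have hthin : IsThinSet (Function.extend e f 0 '' A) :=
    hfA.elim IsSCSet.isThinSet isThinSet_of_finite
  refine ⟨e ⁻¹' A, hA, hthin.mono ?_⟩
  rintro _ ⟨x, hx, rfl⟩
  exact ⟨e x, hx, he.extend_apply f 0 x⟩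

theorem IsFreeUltrafilter.infinite_of_mem {U : Ultrafilter ℕ} (hU : IsFreeUltrafilter U)
    {s : Set ℕ} (hs : s ∈ U) : s.Infinite :=
  fun hfin => hU s hfin hs

section Product

variable {U V : Ultrafilter ℕ} {M : Set (ℕ × ℕ)}

theorem exists_lt_infinite_of_mem_ufProd (hU : IsFreeUltrafilter U) (hV : IsFreeUltrafilter V)
    (hM : M ∈ ufProd U V) : ∃ a b, a < b ∧ {m | (a, m) ∈ M ∧ (b, m) ∈ M}.Infinite := by
  have hcolumns := hU.infinite_of_mem ((mem_ufProd U V M).1 hM)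
  obtain ⟨a, ha⟩ := hcolumns.nonempty
  obtain ⟨b, hb, hab⟩ := hcolumns.exists_gt a
  exact ⟨a, b, hab, hV.infinite_of_mem (Filter.inter_mem ha hb)⟩

theorem not_isThinSet_image_add_of_mem_ufProd (hU : IsFreeUltrafilter U)
    (hV : IsFreeUltrafilter V) (hM : M ∈ ufProd U V) :
    ¬ IsThinSet ((fun p : ℕ × ℕ => p.1 + p.2) '' M) := by
  intro hthin
  obtain ⟨a, b, hab, hinf⟩ := exists_lt_infinite_of_mem_ufProd hU hV hM
  refine hinf.image (add_right_injective a).injOn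
    ((hthin (b - a) (Nat.sub_pos_of_lt hab)).subset ?_)
  rintro _ ⟨m, ⟨ham, hbm⟩, rfl⟩
  have hshift : a + m + (b - a) = b + m := by lia
  exact ⟨⟨(a, m), ham, rfl⟩, (b, m), hbm, hshift.symm⟩

end Product

theorem prod_not_SC_ultrafilter_general {U V : Ultrafilter ℕ} (hU : IsFreeUltrafilter U)
    (hV : IsFreeUltrafilter V) {e : ℕ × ℕ → ℕ} (he : Function.Injective e) :
    ¬ IsSCUltrafilter (Ultrafilter.map e (ufProd U V)) := by
  intro hSC
  obtain ⟨M, hM, hthin⟩ := hSC.exists_isThinSet_image he fun p => p.1 + p.2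
  exact not_isThinSet_image_add_of_mem_ufProd hU hV hM hthin

/-- For every free ultrafilter `U` on ℕ, the product `U · U` (copied to ℕ via
any bijection `e : ℕ × ℕ → ℕ`) is not an (SC)-ultrafilter. -/
theorem prod_not_SC_ultrafilter (U : Ultrafilter ℕ) (hfree : IsFreeUltrafilter U)
    (e : ℕ × ℕ → ℕ) (he : Function.Bijective e) :
    ¬ IsSCUltrafilter (Ultrafilter.map e (ufProd U U)) :=
  prod_not_SC_ultrafilter_general hfree hfree he.injective
end

section
/- For every free ultrafilter U on ℕ, the product U · U is not a thin ultrafilter; that is, for any bijection e : ℕ × ℕ → ℕ, the image of U · U under e is not a thin ultrafilter. -/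
/-- A free ultrafilter `W` on ℕ is a thin ultrafilter if for every `f : ℕ → ℕ`
there is `A ∈ W` with `f '' A` thin or finite. -/
def IsThinUltrafilter (W : Ultrafilter ℕ) : Prop :=
  ∀ f : ℕ → ℕ, ∃ A ∈ W, IsThin (f '' A) ∨ (f '' A).Finite

open Filter

theorem IsFreeUltrafilter.le_atTop {U : Ultrafilter ℕ} (hU : IsFreeUltrafilter U) :
    (U : Filter ℕ) ≤ atTop := by
  rw [← Nat.cofinite_eq_atTop]
  exact fun s hs => Ultrafilter.compl_notMem_iff.mp (hU sᶜ hs)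

theorem exists_lt_eventually_mem_of_mem_ufProd {U V : Ultrafilter ℕ} (hU : IsFreeUltrafilter U)
    {M : Set (ℕ × ℕ)} (hM : M ∈ ufProd U V) :
    ∃ n n', n < n' ∧ ∀ᶠ m in (V : Filter ℕ), (n, m) ∈ M ∧ (n', m) ∈ M := by
  have hfiber : ∀ᶠ n in (U : Filter ℕ), ∀ᶠ m in (V : Filter ℕ), (n, m) ∈ M :=
    (mem_ufProd U V M).mp hM
  obtain ⟨n, hn⟩ := hfiber.exists
  obtain ⟨n', hn', hlt⟩ := (hfiber.and (hU.le_atTop (eventually_gt_atTop n))).exists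
  exact ⟨n, n', hlt, hn.and hn'⟩

theorem tendsto_count_atTop {p : ℕ → Prop} [DecidablePred p] (hp : {n | p n}.Infinite) :
    Tendsto (Nat.count p) atTop atTop :=
  tendsto_atTop_atTop_of_monotone (Nat.count_monotone p) fun k =>
    ⟨Nat.nth p k, (Nat.count_nth_of_infinite hp k).ge⟩

theorem nth_count_add_one_le {p : ℕ → Prop} [DecidablePred p] {x y : ℕ} (hx : p x) (hy : p y)
    (hxy : x < y) : Nat.nth p (Nat.count p x + 1) ≤ y := by
  refine Nat.lt_succ_iff.mp (Nat.nth_lt_of_lt_count ?_)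
  rw [Nat.count_succ, if_pos hy]
  exact Nat.succ_lt_succ (Nat.count_strict_mono hx hxy)

namespace IsThin

theorem eventually_mul_nth_lt {A : Set ℕ} (hA : IsThin A) (C : ℕ) :
    ∀ᶠ k in atTop, C * Nat.nth (· ∈ A) k < Nat.nth (· ∈ A) (k + 1) := by
  have hC : (0 : ℝ) < 1 / (C + 1) := Nat.one_div_pos_of_nat
  filter_upwards [hA.2.eventually_lt_const hC] with k hk
  have hlt : Nat.nth (· ∈ A) k < Nat.nth (· ∈ A) (k + 1) :=
    Nat.nth_strictMono hA.1 (Nat.lt_succ_self k)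
  rw [div_lt_div_iff₀ (by exact_mod_cast hlt.pos) (by positivity)] at hk
  have hk' : Nat.nth (· ∈ A) k * (C + 1) < 1 * Nat.nth (· ∈ A) (k + 1) := by exact_mod_cast hk
  linarith

theorem eventually_mul_lt {A : Set ℕ} (hA : IsThin A) (C : ℕ) :
    ∀ᶠ x in atTop, x ∈ A → ∀ y ∈ A, x < y → C * x < y := by
  classical
  filter_upwards [(tendsto_count_atTop (p := (· ∈ A)) hA.1).eventually (hA.eventually_mul_nth_lt C)]
    with x hgap hx y hy hxy
  rw [Nat.nth_count hx] at hgap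
  exact hgap.trans_le (nth_count_add_one_le hx hy hxy)

end IsThin

theorem eventually_mul_lt_of_isThin_or_finite {A : Set ℕ} (hA : IsThin A ∨ A.Finite) (C : ℕ) :
    ∀ᶠ x in atTop, x ∈ A → ∀ y ∈ A, x < y → C * x < y := by
  rcases hA with hthin | hfin
  · exact hthin.eventually_mul_lt C
  · filter_upwards [Nat.cofinite_eq_atTop ▸ hfin.eventually_cofinite_notMem] with x hx hxA
    exact absurd hxA hx

/-- The function witnessing that products are not thin: two points `(n, m)`, `(n', m)` of a common
row `m` get distinct values, which are asymptotically equal as `m → ∞` with the columns fixed. -/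
def rowCode (p : ℕ × ℕ) : ℕ :=
  2 ^ p.2 + p.1

theorem tendsto_rowCode_atTop (n : ℕ) : Tendsto (fun m => rowCode (n, m)) atTop atTop :=
  tendsto_atTop_mono (fun _ => Nat.le_add_right _ n)
    (tendsto_pow_atTop_atTop_of_one_lt one_lt_two)

theorem eventually_rowCode_le_two_mul (n n' : ℕ) :
    ∀ᶠ m in atTop, rowCode (n', m) ≤ 2 * rowCode (n, m) := by
  filter_upwards [(tendsto_rowCode_atTop n).eventually_ge_atTop n'] with m hm
  simp only [rowCode] at hm ⊢
  omega

theorem prod_not_thin_ultrafilter_general {U V : Ultrafilter ℕ} (hU : IsFreeUltrafilter U)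
    (hV : IsFreeUltrafilter V) {e : ℕ × ℕ → ℕ} (he : Function.Injective e) :
    ¬ IsThinUltrafilter (Ultrafilter.map e (ufProd U V)) := by
  intro hW
  obtain ⟨d, hd⟩ := he.hasLeftInverse
  obtain ⟨A, hA, hsmall⟩ := hW (rowCode ∘ d)
  have hcode : ∀ p, e p ∈ A → rowCode p ∈ (rowCode ∘ d) '' A := fun p hp =>
    ⟨e p, hp, congrArg rowCode (hd p)⟩
  obtain ⟨n, n', hlt, hmem⟩ := exists_lt_eventually_mem_of_mem_ufProd hU (Ultrafilter.mem_map.mp hA)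
  have hgap := (tendsto_rowCode_atTop n).eventually (eventually_mul_lt_of_isThin_or_finite hsmall 2)
  obtain ⟨m, ⟨hm, hm'⟩, hgap_m, hle⟩ :=
    (hmem.and (hV.le_atTop (hgap.and (eventually_rowCode_le_two_mul n n')))).exists
  have hrow : rowCode (n, m) < rowCode (n', m) := Nat.add_lt_add_left hlt _
  exact (hgap_m (hcode _ hm) _ (hcode _ hm') hrow).not_ge hle

/-- For every free ultrafilter `U` on ℕ, the product `U · U` (copied to ℕ via
any bijection `e : ℕ × ℕ → ℕ`) is not a thin ultrafilter. -/
theorem prod_not_thin_ultrafilter (U : Ultrafilter ℕ) (hfree : IsFreeUltrafilter U)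
    (e : ℕ × ℕ → ℕ) (he : Function.Bijective e) :
    ¬ IsThinUltrafilter (Ultrafilter.map e (ufProd U U)) :=
  prod_not_thin_ultrafilter_general hfree hfree he.injective
end

section
/- A free ultrafilter U on ℕ is a P-point if and only if for every function F : ℕ → 2^ℕ (the Cantor space of functions from ℕ to {0,1} with the product topology) there exists A ∈ U such that F[A] is the set of terms of a converging sequence, i.e., there exists x ∈ 2^ℕ such that F[A] \ V is finite for every open neighborhood V of x (this includes the case that F[A] is finite). -/
/-- A free ultrafilter `W` on ℕ is a P-point if for every partition
`{A n : n ∈ ℕ}` of ℕ with `A n ∉ W` for all `n`, there is `B ∈ W` such that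
`B ∩ A n` is finite for every `n`. -/
def IsPPoint (W : Ultrafilter ℕ) : Prop :=
  ∀ A : ℕ → Set ℕ, Pairwise (Function.onFun Disjoint A) → (⋃ n, A n) = Set.univ →
    (∀ n, A n ∉ W) → ∃ B ∈ W, ∀ n, (B ∩ A n).Finite

/-- A subset `S` of the Cantor space `2^ℕ` (here `ℕ → Bool` with the product
topology) is the set of terms of a converging sequence if there is a point `x`
such that `S \ V` is finite for every open neighborhood `V` of `x`. -/
def IsConvergingSeqSet (S : Set (ℕ → Bool)) : Prop :=
  ∃ x : ℕ → Bool, ∀ V : Set (ℕ → Bool), IsOpen V → x ∈ V → (S \ V).Finite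

/-!
An ultrafilter is a P-point exactly when every sequence of its members has a pseudointersection (a
set almost contained in each of them) that is again a member. If `U` is a P-point and `x` is the
limit of `F` along `U`, which exists by compactness, then a pseudointersection in `U` of the
preimages under `F` of a countable neighbourhood basis of `x` has an image converging to `x`.

Conversely, given a sequence `s n ∈ U`, encode membership in every `s n` into the coordinates of an
injective `F : ℕ → 2^ℕ`. If `F[B]` converges for some `B ∈ U`, its limit is also the limit of `F`
along the free ultrafilter `U`, so it lies in the clopen set encoding `s n`; hence all but finitely
many points of `B` belong to `s n`.
-/

open Filter Set Topology

section Cofinite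

variable {α β : Type*}

lemma mem_cofinite_inf_principal {s t : Set α} : s ∈ cofinite ⊓ 𝓟 t ↔ (t \ s).Finite := by
  rw [mem_inf_principal', mem_cofinite, compl_union, compl_compl, sdiff_eq]

lemma cofinite_inf_principal_image_le_map (f : α → β) (s : Set α) :
    cofinite ⊓ 𝓟 (f '' s) ≤ map f (cofinite ⊓ 𝓟 s) := by
  intro t ht
  rw [mem_map, mem_cofinite_inf_principal] at ht
  rw [mem_cofinite_inf_principal, ← image_sdiff_preimage]
  exact ht.image f

lemma map_cofinite_inf_principal_of_injOn {f : α → β} {s : Set α} (hf : InjOn f s) :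
    map f (cofinite ⊓ 𝓟 s) = cofinite ⊓ 𝓟 (f '' s) := by
  ext t
  rw [mem_map, mem_cofinite_inf_principal, mem_cofinite_inf_principal, ← image_sdiff_preimage,
    finite_image_iff (hf.mono sdiff_subset)]

end Cofinite

lemma finite_inter_of_finite_inter_disjointed {α ι : Type*} [PartialOrder ι]
    [LocallyFiniteOrderBot ι] {s : Set α} {t : ι → Set α}
    (h : ∀ i, (s ∩ disjointed t i).Finite) (i : ι) : (s ∩ t i).Finite := by
  have hcover : s ∩ t i ⊆ ⋃ j ∈ Finset.Iic i, s ∩ disjointed t j := by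
    rw [← inter_iUnion₂, biUnion_Iic_disjointed]
    exact inter_subset_inter_right s (le_partialSups t i)
  exact ((Finset.Iic i).finite_toSet.biUnion fun j _ ↦ h j).subset hcover

lemma eventually_mem_of_isClopen_of_tendsto {α X : Type*} [TopologicalSpace X] {f : α → X}
    {l : Filter α} {x : X} {C : Set X} (hC : IsClopen C) (hf : Tendsto f l (𝓝 x))
    (h : ∃ᶠ a in l, f a ∈ C) : ∀ᶠ a in l, f a ∈ C :=
  hf (hC.isOpen.mem_nhds (hC.isClosed.mem_of_frequently_of_tendsto h hf))

lemma finite_sdiff_preimage_of_isClopen {α X : Type*} [TopologicalSpace X] {f : α → X}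
    {l : Filter α} [l.NeBot] {B : Set α} {x : X} {C : Set X} (hl : l ≤ cofinite)
    (hf : InjOn f B) (hB : B ∈ l) (hlim : cofinite ⊓ 𝓟 (f '' B) ≤ 𝓝 x)
    (hC : IsClopen C) (hfC : f ⁻¹' C ∈ l) : (B \ f ⁻¹' C).Finite := by
  have htendsto : Tendsto f (cofinite ⊓ 𝓟 B) (𝓝 x) :=
    (map_cofinite_inf_principal_of_injOn hf).trans_le hlim
  have hfreq : ∃ᶠ a in cofinite ⊓ 𝓟 B, f a ∈ C :=
    (Eventually.frequently hfC).filter_mono (le_inf hl (le_principal_iff.2 hB))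
  exact mem_cofinite_inf_principal.1 (eventually_mem_of_isClopen_of_tendsto hC htendsto hfreq)

lemma isConvergingSeqSet_iff {S : Set (ℕ → Bool)} :
    IsConvergingSeqSet S ↔ ∃ x, cofinite ⊓ 𝓟 S ≤ 𝓝 x := by
  simp only [IsConvergingSeqSet, (nhds_basis_opens _).ge_iff, mem_cofinite_inf_principal, and_imp,
    imp.swap]

lemma IsFreeUltrafilter.le_cofinite {U : Ultrafilter ℕ} (hU : IsFreeUltrafilter U) :
    ↑U ≤ (cofinite : Filter ℕ) :=
  fun _ hs ↦ Ultrafilter.compl_notMem_iff.1 (hU _ hs)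

lemma IsPPoint.exists_pseudointersection {U : Ultrafilter ℕ} (hU : IsPPoint U) {s : ℕ → Set ℕ}
    (hs : ∀ n, s n ∈ U) : ∃ B ∈ U, ∀ n, (B \ s n).Finite := by
  by_cases hinter : ⋂ n, s n ∈ U
  · exact ⟨_, hinter, fun n ↦ by simp [sdiff_eq_empty.2 (iInter_subset s n)]⟩
  -- Adding the null set `⋂ n, s n` to each complement makes the sets cover `ℕ`.
  let t : ℕ → Set ℕ := fun n ↦ (s n)ᶜ ∪ ⋂ m, s m
  have ht_notMem (n : ℕ) : t n ∉ U := by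
    simp [t, Ultrafilter.union_mem_iff, Ultrafilter.compl_mem_iff_notMem, hs, hinter]
  have ht_cover : ⋃ n, t n = univ := by
    rw [← iUnion_union, ← compl_iInter, compl_union_self]
  obtain ⟨B, hB, hfin⟩ := hU (disjointed t) (disjoint_disjointed t)
    (iUnion_disjointed.trans ht_cover)
    (fun n hn ↦ ht_notMem n (mem_of_superset hn (disjointed_subset t n)))
  refine ⟨B, hB, fun n ↦ (finite_inter_of_finite_inter_disjointed hfin n).subset ?_⟩
  exact inter_subset_inter_right B subset_union_left

lemma isPPoint_iff_exists_pseudointersection {U : Ultrafilter ℕ} :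
    IsPPoint U ↔ ∀ s : ℕ → Set ℕ, (∀ n, s n ∈ U) → ∃ B ∈ U, ∀ n, (B \ s n).Finite := by
  refine ⟨fun hU _ ↦ hU.exists_pseudointersection, fun h A _ _ hA ↦ ?_⟩
  simpa only [sdiff_compl] using
    h (fun n ↦ (A n)ᶜ) fun n ↦ Ultrafilter.compl_mem_iff_notMem.2 (hA n)

lemma IsPPoint.exists_tendsto_cofinite_inf_principal {U : Ultrafilter ℕ} (hU : IsPPoint U)
    {β : Type*} {f : ℕ → β} {l : Filter β} [l.IsCountablyGenerated] (hf : Tendsto f U l) :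
    ∃ B ∈ U, Tendsto f (cofinite ⊓ 𝓟 B) l := by
  obtain ⟨V, hV⟩ := l.exists_antitone_basis
  obtain ⟨B, hB, hfin⟩ := hU.exists_pseudointersection fun n ↦ hf (hV.mem n)
  exact ⟨B, hB, hV.tendsto_right_iff.2 fun n _ ↦ mem_cofinite_inf_principal.2 (hfin n)⟩

lemma IsPPoint.exists_tendsto_nhds {U : Ultrafilter ℕ} (hU : IsPPoint U) {X : Type*}
    [TopologicalSpace X] [CompactSpace X] [FirstCountableTopology X] (f : ℕ → X) :
    ∃ B ∈ U, ∃ x, Tendsto f (cofinite ⊓ 𝓟 B) (𝓝 x) := by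
  obtain ⟨B, hB, hlim⟩ := hU.exists_tendsto_cofinite_inf_principal (U.map f).le_nhds_lim
  exact ⟨B, hB, _, hlim⟩

lemma exists_injective_isClopen_preimage_eq {α : Type*} [Countable α] (s : ℕ → Set α) :
    ∃ F : α → ℕ → Bool, Function.Injective F ∧ ∀ n, ∃ C, IsClopen C ∧ F ⁻¹' C = s n := by
  classical
  obtain ⟨e, he⟩ := exists_injective_nat α
  -- Even coordinates record membership in the sets `s n`, odd ones the point itself.
  let G (a : α) : ℕ ⊕ ℕ → Bool := Sum.elim (fun n ↦ decide (a ∈ s n)) (fun n ↦ decide (e a = n))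
  let φ : ℕ ⊕ ℕ ≃ ℕ := Equiv.natSumNatEquivNat
  refine ⟨fun a ↦ G a ∘ φ.symm, fun a b hab ↦ ?_, fun n ↦ ?_⟩
  · have hcode : G a (.inr (e b)) = G b (.inr (e b)) :=
      congrFun (φ.symm.surjective.injective_comp_right hab) _
    exact he (by simpa [G] using hcode)
  · refine ⟨(fun y ↦ y (φ (.inl n))) ⁻¹' {true},
      (isClopen_discrete {true}).preimage (continuous_apply _), ?_⟩
    ext a
    simp [G]

/-- A free ultrafilter `U` on ℕ is a P-point iff for every `F : ℕ → 2^ℕ` there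
is `A ∈ U` such that `F '' A` is the set of terms of a converging sequence. -/
theorem p_point_iff_converging_sequences (U : Ultrafilter ℕ)
    (hfree : IsFreeUltrafilter U) :
    IsPPoint U ↔
      ∀ F : ℕ → (ℕ → Bool), ∃ A ∈ U, IsConvergingSeqSet (F '' A) := by
  constructor
  · intro hU F
    obtain ⟨B, hB, x, hlim⟩ := hU.exists_tendsto_nhds F
    exact ⟨B, hB, isConvergingSeqSet_iff.2
      ⟨x, (cofinite_inf_principal_image_le_map F B).trans hlim⟩⟩
  · intro h
    refine isPPoint_iff_exists_pseudointersection.2 fun s hs ↦ ?_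
    obtain ⟨F, hF, hclopen⟩ := exists_injective_isClopen_preimage_eq s
    obtain ⟨B, hB, hconv⟩ := h F
    obtain ⟨x, hlim⟩ := isConvergingSeqSet_iff.1 hconv
    refine ⟨B, hB, fun n ↦ ?_⟩
    obtain ⟨C, hC, hCs⟩ := hclopen n
    rw [← hCs]
    exact finite_sdiff_preimage_of_isClopen hfree.le_cofinite hF.injOn hB hlim hC (hCs ▸ hs n)
end

section
/- A free ultrafilter U on ℕ is a P-point if and only if for every function F : ℕ → ω₁ (the first uncountable ordinal) there exists A ∈ U such that F[A] has order type at most ω, i.e., for every element x of F[A] the set {y ∈ F[A] : y < x} is finite. -/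
/-- The first uncountable ordinal `ω₁`, viewed as the set of countable
ordinals. -/
def Omega1 : Type _ := {o : Ordinal // o < (Cardinal.aleph 1).ord}

noncomputable instance : LinearOrder Omega1 :=
  inferInstanceAs (LinearOrder {o : Ordinal // o < (Cardinal.aleph 1).ord})

/-- A set `S` of countable ordinals has order type at most `ω` iff every
element of `S` has only finitely many predecessors in `S`. -/
def HasOrderTypeLeOmega (S : Set Omega1) : Prop :=
  ∀ x ∈ S, {y ∈ S | y < x}.Finite

/-!
Forward direction: let `U` be a P-point and `F` a map into a well-order no fibre of which lies in
`U`. By minimality, `U`-almost every `x` satisfies `{y | F y ≤ F x} ∉ U`. There are countably many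
such sets, so some member of `U` meets each of them in a finite set, and its image has finite
initial segments.

Backward direction: code a map `g : ℕ → ℕ` with fibres outside `U` by `x ↦ (g x, x)` into `ω²`. A
set `A ∈ U` contains points `x` with `g x` arbitrarily large, and `(g x, x)` lies above the codes of
all of `A ∩ g ⁻¹' {n}` as soon as `n < g x`. Hence `ω₁` can be replaced by any
well-order containing a copy of `ω²`.
-/

/-- P-points on an arbitrary type, with partitions into countably many pieces encoded as the fibres
of maps to `ℕ`. -/
def IsPPointOn {α : Type*} (U : Ultrafilter α) : Prop :=
  ∀ g : α → ℕ, (∀ n, g ⁻¹' {n} ∉ U) → ∃ B ∈ U, ∀ n, (B ∩ g ⁻¹' {n}).Finite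

/-- For a subset of a linear order: being well-ordered with order type at most `ω`. Extends
`HasOrderTypeLeOmega` beyond `Omega1`. -/
def HasFinitePredecessors {γ : Type*} [LT γ] (S : Set γ) : Prop :=
  ∀ x ∈ S, {y ∈ S | y < x}.Finite

theorem isPPoint_iff_isPPointOn {U : Ultrafilter ℕ} : IsPPoint U ↔ IsPPointOn U := by
  constructor
  · intro hU g hg
    exact hU (fun n => g ⁻¹' {n}) (pairwise_disjoint_fiber g)
      (Set.eq_univ_of_forall fun x => Set.mem_iUnion.2 ⟨g x, rfl⟩) hg
  · intro hU A hdisj hcover hA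
    choose g hg using fun x => Set.mem_iUnion.1 (hcover ▸ Set.mem_univ x)
    have hfiber : ∀ n, g ⁻¹' {n} = A n := by
      refine fun n => Set.Subset.antisymm (fun x hx => ?_) fun x hx => ?_
      · exact hx ▸ hg x
      · exact hdisj.eq (Set.not_disjoint_iff.2 ⟨x, hg x, hx⟩)
    simpa only [hfiber] using hU g (by simpa only [hfiber] using hA)

section PPointOn

variable {α γ : Type*} {U : Ultrafilter α}

theorem IsPPointOn.exists_inter_finite {ι : Type*} [Countable ι] (hU : IsPPointOn U)
    {A : ι → Set α} (hA : ∀ i, A i ∉ U) : ∃ B ∈ U, ∀ i, (B ∩ A i).Finite := by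
  by_cases hcover : ⋃ i, A i ∈ U
  swap
  · refine ⟨(⋃ i, A i)ᶜ, Ultrafilter.compl_mem_iff_notMem.2 hcover, fun i => ?_⟩
    rw [(Set.disjoint_compl_left_iff_subset.2 (Set.subset_iUnion A i)).inter_eq]
    exact Set.finite_empty
  obtain ⟨e, he⟩ := exists_injective_nat ι
  let g : α → ℕ := fun x => sInf (e '' {i | x ∈ A i})
  have hg_mem : ∀ x ∈ ⋃ i, A i, ∃ i, x ∈ A i ∧ e i = g x := fun x hx =>
    Nat.sInf_mem (Set.Nonempty.image e (Set.mem_iUnion.1 hx))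
  have hg_fiber : ∀ n, g ⁻¹' {n} ∉ U := by
    intro n hn
    have hn' := Filter.inter_mem hn hcover
    obtain ⟨x, hxn, hx⟩ := U.nonempty_of_mem hn'
    obtain ⟨i, -, hi⟩ := hg_mem x hx
    refine hA i (Filter.mem_of_superset hn' ?_)
    rintro y ⟨hyn, hy⟩
    obtain ⟨j, hyj, hj⟩ := hg_mem y hy
    have hij : e j = e i := by rw [hi, hj, hxn, hyn]
    exact he hij ▸ hyj
  obtain ⟨B, hB, hfin⟩ := hU g hg_fiber
  refine ⟨B, hB, fun i => ((Set.finite_Iic (e i)).biUnion fun n _ => hfin n).subset ?_⟩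
  rintro x ⟨hxB, hxi⟩
  have hgx : g x ≤ e i := Nat.sInf_le ⟨i, hxi, rfl⟩
  exact Set.mem_biUnion hgx ⟨hxB, rfl⟩

theorem setOf_Iic_notMem_mem_of_singleton_notMem [LinearOrder γ] [WellFoundedLT γ]
    {V : Ultrafilter γ} (hV : ∀ v, {v} ∉ V) : {v | Set.Iic v ∉ V} ∈ V := by
  by_contra hlarge
  have hS : {v | Set.Iic v ∈ V} ∈ V := by
    simpa only [Set.compl_ofPred, not_not] using Ultrafilter.compl_mem_iff_notMem.2 hlarge
  obtain ⟨v, hv, hmin⟩ := wellFounded_lt.has_min _ (V.nonempty_of_mem hS)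
  refine hV v (Filter.mem_of_superset (Filter.inter_mem hv hS) fun w ⟨hwv, hw⟩ => ?_)
  exact le_antisymm hwv (not_lt.1 (hmin w hw))

theorem IsPPointOn.exists_hasFinitePredecessors_image [Countable α] [LinearOrder γ]
    [WellFoundedLT γ] (hU : IsPPointOn U) (F : α → γ) :
    ∃ A ∈ U, HasFinitePredecessors (F '' A) := by
  by_cases hconst : ∃ v, {v} ∈ U.map F
  · obtain ⟨v, hv⟩ := hconst
    refine ⟨F ⁻¹' {v}, hv, fun x _ => (Set.finite_singleton v).subset ?_⟩
    exact fun y hy => Set.image_preimage_subset F {v} hy.1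
  let D : Set α := {x | F ⁻¹' Set.Iic (F x) ∉ U}
  have hD : D ∈ U := setOf_Iic_notMem_mem_of_singleton_notMem (not_exists.1 hconst)
  obtain ⟨B, hB, hfin⟩ :=
    hU.exists_inter_finite (A := fun x : D => F ⁻¹' Set.Iic (F x)) fun x => x.2
  refine ⟨B ∩ D, Filter.inter_mem hB hD, ?_⟩
  rintro _ ⟨x, ⟨-, hxD⟩, rfl⟩
  refine ((hfin ⟨x, hxD⟩).image F).subset ?_
  rintro _ ⟨⟨y, ⟨hyB, -⟩, rfl⟩, hyx⟩
  exact ⟨y, ⟨hyB, hyx.le⟩, rfl⟩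

theorem preimage_Ioi_mem_of_fiber_notMem [LinearOrder γ] [LocallyFiniteOrderBot γ] {g : α → γ}
    (hg : ∀ n, g ⁻¹' {n} ∉ U) (n : γ) : g ⁻¹' Set.Ioi n ∈ U := by
  rw [← Set.compl_Iic, Set.preimage_compl, Ultrafilter.compl_mem_iff_notMem,
    ← Set.biUnion_preimage_singleton, Ultrafilter.finite_biUnion_mem_iff (Set.finite_Iic n)]
  exact fun ⟨k, _, hk⟩ => hg k hk

theorem isPPointOn_of_forall_natLex [Countable α]
    (h : ∀ F : α → ℕ ×ₗ ℕ, ∃ A ∈ U, HasFinitePredecessors (F '' A)) : IsPPointOn U := by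
  intro g hg
  obtain ⟨e, he⟩ := exists_injective_nat α
  let F : α → ℕ ×ₗ ℕ := fun x => toLex (g x, e x)
  have hF : F.Injective := fun x y hxy => he (congrArg (fun p => (ofLex p).2) hxy)
  obtain ⟨A, hA, hfin⟩ := h F
  refine ⟨A, hA, fun n => Set.Finite.of_finite_image ?_ hF.injOn⟩
  obtain ⟨x, hxA, hx⟩ :=
    U.nonempty_of_mem (Filter.inter_mem hA (preimage_Ioi_mem_of_fiber_notMem hg n))
  refine (hfin (F x) ⟨x, hxA, rfl⟩).subset ?_
  rintro _ ⟨y, ⟨hyA, rfl⟩, rfl⟩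
  exact ⟨⟨y, hyA, rfl⟩, Prod.Lex.toLex_lt_toLex.2 (Or.inl hx)⟩

end PPointOn

theorem HasFinitePredecessors.of_image {β γ : Type*} [Preorder β] [Preorder γ] (e : β ↪o γ)
    {S : Set β} (h : HasFinitePredecessors (e '' S)) : HasFinitePredecessors S := by
  refine fun x hx => Set.Finite.of_finite_image ((h (e x) ⟨x, hx, rfl⟩).subset ?_) e.injective.injOn
  rintro _ ⟨y, ⟨hy, hyx⟩, rfl⟩
  exact ⟨⟨y, hy, rfl⟩, e.lt_iff_lt.2 hyx⟩

section Omega1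

universe u v

instance : WellFoundedLT Omega1 :=
  inferInstanceAs (WellFoundedLT {o : Ordinal // o < (Cardinal.aleph 1).ord})

theorem nonempty_orderEmbedding_omega1 (β : Type v) [Countable β] [LinearOrder β]
    [WellFoundedLT β] : Nonempty (β ↪o Omega1.{u}) := by
  let rank : β → Ordinal.{v} := Ordinal.typein (α := β) (· < ·)
  have hrank : ∀ x, Ordinal.lift.{u} (rank x) < Ordinal.lift.{v} (Cardinal.aleph 1).ord := by
    intro x
    rw [Cardinal.lift_ord, Cardinal.lift_aleph, Ordinal.lift_one, Cardinal.lt_ord,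
      ← Ordinal.lift_card, Ordinal.card_typein]
    exact (Cardinal.lift_le_aleph0.2 Cardinal.mk_le_aleph0).trans_lt
      Cardinal.aleph0_lt_aleph_one
  choose f hf hf_lift using fun x => Ordinal.lt_lift_iff.1 (hrank x)
  refine ⟨OrderEmbedding.ofStrictMono (fun x => (⟨f x, hf x⟩ : Omega1)) fun x y hxy => ?_⟩
  change f x < f y
  rw [← Ordinal.lift_lt.{v}, hf_lift, hf_lift, Ordinal.lift_lt]
  exact (Ordinal.typein_lt_typein (· < ·)).2 hxy

end Omega1

theorem p_point_iff_order_type_le_omega_general {α γ : Type*} [Countable α] [LinearOrder γ]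
    [WellFoundedLT γ] (e : ℕ ×ₗ ℕ ↪o γ) (U : Ultrafilter α) :
    IsPPointOn U ↔ ∀ F : α → γ, ∃ A ∈ U, HasFinitePredecessors (F '' A) := by
  refine ⟨fun hU F => hU.exists_hasFinitePredecessors_image F,
    fun h => isPPointOn_of_forall_natLex fun F => ?_⟩
  obtain ⟨A, hA, hfin⟩ := h (e ∘ F)
  exact ⟨A, hA, .of_image e (Set.image_comp e F A ▸ hfin)⟩

/-- A free ultrafilter `U` on ℕ is a P-point iff for every `F : ℕ → ω₁` there
is `A ∈ U` such that `F '' A` has order type at most `ω`. -/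
theorem p_point_iff_order_type_le_omega (U : Ultrafilter ℕ)
    (hfree : IsFreeUltrafilter U) :
    IsPPoint U ↔
      ∀ F : ℕ → Omega1, ∃ A ∈ U, HasOrderTypeLeOmega (F '' A) := by
  have : Countable (ℕ ×ₗ ℕ) := .of_equiv _ toLex
  obtain ⟨e⟩ := nonempty_orderEmbedding_omega1 (ℕ ×ₗ ℕ)
  exact isPPoint_iff_isPPointOn.trans (p_point_iff_order_type_le_omega_general e U)
end
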